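/- arXiv:1402.0546 — 4 statements merged into one kernel-verified Lean document; each statement's English description precedes it below -/
import Mathlib

section
/- Let n ≥ 1 be an integer and let γ > 1. Let g : ℝ → ℝ be (n+1)-times continuously differentiable on (0,∞), bounded below by 1, and suppose there is a constant C₀ > 0 such that |g^{(k)}(r)| ≤ C₀ r^{-k} for all r > 0 and all integers 0 ≤ k ≤ n+1. Then there exists a constant M such that for every t ∈ (0,1) the function r ↦ (d/dr)^{n+1}[ r^{n-1} exp(-r^γ/g(r t^{-1/γ})) ] is integrable on (0,∞) and ∫_0^∞ |(d/dr)^{n+1}[ r^{n-1} exp(-r^γ/g(r t^{-1/γ})) ]| dr ≤ M. -/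
open MeasureTheory Real Set
open scoped ENNReal

/-!
The class of functions `g` with `|g⁽ʲ⁾(r)| ≤ C r⁻ʲ` is invariant under dilations, so the scale
`t ^ (-1/γ)` disappears and it suffices to bound the integral uniformly over this class. Estimates
of this shape are stable under products, inversion and composition; in particular
`h = -r ^ γ / g` satisfies `|h⁽ʲ⁾(r)| ≤ K r ^ (γ - j)`. A polynomial of degree `n - 1` is
annihilated by `n` derivatives, so in the Leibniz expansion of `(r ^ (n - 1) e ^ h)⁽ⁿ⁺¹⁾` the
exponential is always differentiated. As `(e ^ h)' = h' e ^ h`, every term carries a factor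
`r ^ γ`, and the derivative is at most a constant times
`r ^ (γ - 2) (1 + K r ^ γ) ^ n e ^ (-r ^ γ / C)`, which is integrable on `(0, ∞)` since `γ > 1`.
-/

open scoped Nat

/-- The symbol estimates of order `N` with weight `w` on `(0, ∞)`: `f` is of class `C^N` there and
`‖f⁽ᵏ⁾(r)‖ ≤ w(r) r⁻ᵏ` for all `k ≤ N`. The power of `r` is kept on the left-hand side, which avoids
division. -/
structure HasSymbolBound {E : Type*} [NormedAddCommGroup E] [NormedSpace ℝ E]
    (N : ℕ) (f : ℝ → E) (w : ℝ → ℝ) : Prop where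
  contDiffOn : ContDiffOn ℝ N f (Ioi 0)
  norm_mul_pow_le : ∀ k ≤ N, ∀ r, 0 < r → ‖iteratedDerivWithin k f (Ioi 0) r‖ * r ^ k ≤ w r

theorem norm_iteratedDerivWithin_mul_mul_pow_le {A : Type*} [NormedRing A] [NormedAlgebra ℝ A]
    {f g : ℝ → A} {s : Set ℝ} {k : ℕ} {r M : ℝ} (hf : ContDiffOn ℝ k f s)
    (hg : ContDiffOn ℝ k g s) (hs : UniqueDiffOn ℝ s) (hrs : r ∈ s) (hr : 0 ≤ r)
    (hM : ∀ j ≤ k, (‖iteratedDerivWithin j f s r‖ * r ^ j) *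
      (‖iteratedDerivWithin (k - j) g s r‖ * r ^ (k - j)) ≤ M) :
    ‖iteratedDerivWithin k (fun x => f x * g x) s r‖ * r ^ k ≤ 2 ^ k * M := by
  have leibniz := norm_iteratedFDerivWithin_mul_le hf hg hs hrs le_rfl
  simp only [norm_iteratedFDerivWithin_eq_norm_iteratedDerivWithin] at leibniz
  calc ‖iteratedDerivWithin k (fun x => f x * g x) s r‖ * r ^ k
      ≤ (∑ j ∈ Finset.range (k + 1), (k.choose j : ℝ) * ‖iteratedDerivWithin j f s r‖ *
          ‖iteratedDerivWithin (k - j) g s r‖) * r ^ k := by gcongr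
    _ = ∑ j ∈ Finset.range (k + 1), (k.choose j : ℝ) *
          ((‖iteratedDerivWithin j f s r‖ * r ^ j) *
            (‖iteratedDerivWithin (k - j) g s r‖ * r ^ (k - j))) := by
        rw [Finset.sum_mul]
        refine Finset.sum_congr rfl fun j hj => ?_
        rw [← pow_mul_pow_sub r (Finset.mem_range_succ_iff.1 hj)]
        ring
    _ ≤ ∑ j ∈ Finset.range (k + 1), (k.choose j : ℝ) * M := by
        gcongr with j hj
        exact hM j (Finset.mem_range_succ_iff.1 hj)
    _ = 2 ^ k * M := by
        rw [← Finset.sum_mul]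
        exact_mod_cast congrArg (fun i : ℕ => (i : ℝ) * M) (Nat.sum_range_choose k)

theorem norm_iteratedDerivWithin_inv_le {N k : ℕ} (hk : k ≤ N) {y : ℝ} (hy : y ≠ 0) :
    ‖iteratedDerivWithin k (fun x : ℝ => x⁻¹) {0}ᶜ y‖ ≤ N ! * (1 + ‖y‖⁻¹) ^ (N + 1) := by
  have hzpow : y ^ (-1 - k : ℤ) = y⁻¹ ^ (k + 1) := by
    rw [inv_pow, ← zpow_natCast, ← zpow_neg]
    congr 1
    push_cast
    ring
  simp only [← one_div]
  rw [iteratedDerivWithin_one_div k isOpen_compl_singleton hy]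
  simp only [hzpow, norm_mul, norm_pow, norm_neg, norm_one, one_pow, one_mul, norm_inv,
    RCLike.norm_natCast, one_div]
  calc (k ! : ℝ) * ‖y‖⁻¹ ^ (k + 1) ≤ N ! * (1 + ‖y‖⁻¹) ^ (k + 1) := by
        gcongr
        exact le_add_of_nonneg_left zero_le_one
    _ ≤ N ! * (1 + ‖y‖⁻¹) ^ (N + 1) := by
        gcongr
        exact le_add_of_nonneg_right (by positivity)

namespace HasSymbolBound

section NormedSpace

variable {E : Type*} [NormedAddCommGroup E] [NormedSpace ℝ E] {N : ℕ} {f : ℝ → E} {w : ℝ → ℝ}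

theorem of_norm_le_mul_rpow_neg (hf : ContDiffOn ℝ N f (Ioi 0))
    (hle : ∀ k ≤ N, ∀ r : ℝ, 0 < r →
      ‖iteratedDerivWithin k f (Ioi 0) r‖ ≤ w r * r ^ (-(k : ℝ))) :
    HasSymbolBound N f w := by
  refine ⟨hf, fun k hk r hr => ?_⟩
  rw [← le_div_iff₀ (pow_pos hr k), div_eq_mul_inv, ← rpow_natCast, ← rpow_neg hr.le]
  exact hle k hk r hr

theorem norm_le (hf : HasSymbolBound N f w) {r : ℝ} (hr : 0 < r) : ‖f r‖ ≤ w r := by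
  simpa using hf.norm_mul_pow_le 0 N.zero_le r hr

theorem weight_nonneg (hf : HasSymbolBound N f w) {r : ℝ} (hr : 0 < r) : 0 ≤ w r :=
  (norm_nonneg _).trans (hf.norm_le hr)

theorem mono {w' : ℝ → ℝ} (hf : HasSymbolBound N f w) (hw : ∀ r, 0 < r → w r ≤ w' r) :
    HasSymbolBound N f w' :=
  ⟨hf.contDiffOn, fun k hk r hr => (hf.norm_mul_pow_le k hk r hr).trans (hw r hr)⟩

theorem of_le {N' : ℕ} (hf : HasSymbolBound N f w) (hN : N' ≤ N) : HasSymbolBound N' f w :=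
  ⟨hf.contDiffOn.of_le (mod_cast hN), fun k hk => hf.norm_mul_pow_le k (hk.trans hN)⟩

theorem congr {f' : ℝ → E} (hf : HasSymbolBound N f w) (hf' : EqOn f' f (Ioi 0)) :
    HasSymbolBound N f' w := by
  refine ⟨hf.contDiffOn.congr hf', fun k hk r hr => ?_⟩
  rw [iteratedDerivWithin_congr hf' (mem_Ioi.2 hr)]
  exact hf.norm_mul_pow_le k hk r hr

theorem neg (hf : HasSymbolBound N f w) : HasSymbolBound N (fun r => -f r) w := by
  refine ⟨hf.contDiffOn.neg, fun k hk r hr => ?_⟩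
  rw [iteratedDerivWithin_fun_neg, norm_neg]
  exact hf.norm_mul_pow_le k hk r hr

theorem derivWithin (hf : HasSymbolBound (N + 1) f w) :
    HasSymbolBound N (derivWithin f (Ioi 0)) fun r => w r / r := by
  refine ⟨hf.contDiffOn.derivWithin (uniqueDiffOn_Ioi 0) (by norm_cast), fun k hk r hr => ?_⟩
  rw [← iteratedDerivWithin_succ', le_div_iff₀ hr, mul_assoc, ← pow_succ]
  exact hf.norm_mul_pow_le (k + 1) (Nat.succ_le_succ hk) r hr

theorem comp_mul_right {f : ℝ → ℝ} (hf : HasSymbolBound N f w) {s : ℝ} (hs : 0 < s) :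
    HasSymbolBound N (fun r => f (r * s)) fun r => w (r * s) := by
  simp only [mul_comm _ s]
  have hmaps : MapsTo (s * ·) (Ioi (0 : ℝ)) (Ioi 0) := fun r hr => mul_pos hs hr
  refine ⟨hf.contDiffOn.comp (by fun_prop) hmaps, fun k hk r hr => ?_⟩
  rw [iteratedDerivWithin_comp_const_smul (mem_Ioi.2 hr) (uniqueDiffOn_Ioi 0)
    (hf.contDiffOn.of_le (mod_cast hk)) s hmaps, norm_smul, norm_pow, norm_of_nonneg hs.le]
  calc s ^ k * ‖iteratedDerivWithin k f (Ioi 0) (s * r)‖ * r ^ k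
      = ‖iteratedDerivWithin k f (Ioi 0) (s * r)‖ * (s * r) ^ k := by ring
    _ ≤ w (s * r) := hf.norm_mul_pow_le k hk _ (mul_pos hs hr)

theorem comp {F : ℝ → E} {f : ℝ → ℝ} {t : Set ℝ} {C : ℝ → ℝ} (hF : ContDiffOn ℝ N F t)
    (hf : HasSymbolBound N f w) (ht : UniqueDiffOn ℝ t) (hft : MapsTo f (Ioi 0) t)
    (hC : ∀ k ≤ N, ∀ r, 0 < r → ‖iteratedDerivWithin k F t (f r)‖ ≤ C r) :
    HasSymbolBound N (fun r => F (f r)) fun r => N ! * C r * (1 + w r) ^ N := by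
  refine ⟨hF.comp hf.contDiffOn hft, fun k hk r hr => ?_⟩
  have hw : 0 ≤ w r := hf.weight_nonneg hr
  have hC0 : 0 ≤ C r := (norm_nonneg _).trans (hC k hk r hr)
  have faa_di_bruno : ‖iteratedDerivWithin k (F ∘ f) (Ioi 0) r‖ ≤
      k ! * C r * ((1 + w r) / r) ^ k := by
    rw [← norm_iteratedFDerivWithin_eq_norm_iteratedDerivWithin]
    refine norm_iteratedFDerivWithin_comp_le hF hf.contDiffOn (mod_cast hk) ht
      (uniqueDiffOn_Ioi 0) hft hr (fun j hj => ?_) fun j hj₁ hj => ?_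
    · rw [norm_iteratedFDerivWithin_eq_norm_iteratedDerivWithin]
      exact hC j (hj.trans hk) r hr
    · rw [norm_iteratedFDerivWithin_eq_norm_iteratedDerivWithin, div_pow,
        le_div_iff₀ (pow_pos hr j)]
      calc ‖iteratedDerivWithin j f (Ioi 0) r‖ * r ^ j
          ≤ 1 + w r := (hf.norm_mul_pow_le j (hj.trans hk) r hr).trans (by linarith)
        _ ≤ (1 + w r) ^ j := le_self_pow₀ (by linarith) (by omega)
  rw [div_pow, ← mul_div_assoc, le_div_iff₀ (pow_pos hr k)] at faa_di_bruno
  refine faa_di_bruno.trans ?_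
  gcongr
  linarith

end NormedSpace

variable {N : ℕ} {w : ℝ → ℝ}

theorem mul {A : Type*} [NormedRing A] [NormedAlgebra ℝ A] {f g : ℝ → A} {v : ℝ → ℝ}
    (hf : HasSymbolBound N f v) (hg : HasSymbolBound N g w) :
    HasSymbolBound N (fun r => f r * g r) fun r => 2 ^ N * (v r * w r) := by
  refine ⟨hf.contDiffOn.mul hg.contDiffOn, fun k hk r hr => ?_⟩
  have hv0 : 0 ≤ v r := hf.weight_nonneg hr
  have hw0 : 0 ≤ w r := hg.weight_nonneg hr
  calc ‖iteratedDerivWithin k (fun x => f x * g x) (Ioi 0) r‖ * r ^ k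
      ≤ 2 ^ k * (v r * w r) := by
        refine norm_iteratedDerivWithin_mul_mul_pow_le (hf.of_le hk).contDiffOn
          (hg.of_le hk).contDiffOn (uniqueDiffOn_Ioi 0) hr hr.le fun j hj => ?_
        exact mul_le_mul (hf.norm_mul_pow_le j (hj.trans hk) r hr)
          (hg.norm_mul_pow_le (k - j) ((k.sub_le j).trans hk) r hr) (by positivity) hv0
    _ ≤ 2 ^ N * (v r * w r) := by
        gcongr
        exact one_le_two

theorem inv {f : ℝ → ℝ} (hf : HasSymbolBound N f w) (hf0 : ∀ r, 0 < r → f r ≠ 0) :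
    HasSymbolBound N (fun r => (f r)⁻¹)
      fun r => N ! * (N ! * (1 + ‖f r‖⁻¹) ^ (N + 1)) * (1 + w r) ^ N :=
  comp (contDiffOn_id.inv fun _ hy => hy) hf isOpen_compl_singleton.uniqueDiffOn hf0
    fun _ hk r hr => norm_iteratedDerivWithin_inv_le hk (hf0 r hr)

theorem exp {h : ℝ → ℝ} (hh : HasSymbolBound N h w) :
    HasSymbolBound N (fun r => exp (h r)) fun r => N ! * exp (h r) * (1 + w r) ^ N := by
  refine comp contDiff_exp.contDiffOn hh uniqueDiffOn_univ (mapsTo_univ _ _) fun k _ r _ => ?_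
  rw [iteratedDerivWithin_univ, iteratedDeriv_eq_iterate, iter_deriv_exp,
    norm_of_nonneg (exp_pos _).le]

theorem derivWithin_exp {h : ℝ → ℝ} (hh : HasSymbolBound (N + 1) h w) :
    HasSymbolBound N (_root_.derivWithin (fun r => Real.exp (h r)) (Ioi 0))
      fun r => 2 ^ N * (w r / r * (N ! * Real.exp (h r) * (1 + w r) ^ N)) := by
  refine (hh.derivWithin.mul (hh.of_le N.le_succ).exp).congr fun r hr => ?_
  rw [_root_.derivWithin_exp (hh.contDiffOn.differentiableOn (by simp) r hr)
    (uniqueDiffOn_Ioi 0 r hr), mul_comm]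

end HasSymbolBound

theorem hasSymbolBound_rpow (N : ℕ) (γ : ℝ) :
    HasSymbolBound N (fun r : ℝ => r ^ γ)
      fun r => (∑ k ∈ Finset.range (N + 1), |(descPochhammer ℝ k).eval γ|) * r ^ γ := by
  refine ⟨contDiffOn_id.rpow_const_of_ne fun r hr => ne_of_gt hr, fun k hk r hr => ?_⟩
  rw [iteratedDerivWithin_of_isOpen_eq_iterate isOpen_Ioi (mem_Ioi.2 hr), iter_deriv_rpow_const,
    norm_mul, norm_of_nonneg (rpow_nonneg hr.le _), mul_assoc, ← rpow_natCast r k, ← rpow_add hr,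
    sub_add_cancel, norm_eq_abs]
  gcongr
  exact Finset.single_le_sum (f := fun k => |(descPochhammer ℝ k).eval γ|)
    (fun _ _ => abs_nonneg _) (Finset.mem_range_succ_iff.2 hk)

theorem hasSymbolBound_pow (N m : ℕ) :
    HasSymbolBound N (fun r : ℝ => r ^ m) fun r => m ! * r ^ m := by
  refine ⟨contDiffOn_id.pow m, fun k _ r hr => ?_⟩
  rw [iteratedDerivWithin_pow (mem_Ioi.2 hr) (uniqueDiffOn_Ioi 0), norm_of_nonneg (by positivity)]
  rcases le_or_gt k m with hkm | hmk
  · rw [mul_assoc, pow_sub_mul_pow r hkm, ← Nat.factorial_mul_descFactorial hkm]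
    gcongr
    exact Nat.le_mul_of_pos_left _ (Nat.factorial_pos _)
  · rw [Nat.descFactorial_of_lt hmk, Nat.cast_zero, zero_mul, zero_mul]
    positivity

theorem exists_hasSymbolBound_neg_rpow_div (N : ℕ) (γ C : ℝ) {c : ℝ} (hc : 0 < c) :
    ∃ K : ℝ, ∀ g : ℝ → ℝ, (∀ r, 0 < r → c ≤ g r) → HasSymbolBound N g (fun _ => C) →
      HasSymbolBound N (fun r => -(r ^ γ) / g r) fun r => K * r ^ γ := by
  set P : ℝ := ∑ k ∈ Finset.range (N + 1), |(descPochhammer ℝ k).eval γ|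
  refine ⟨2 ^ N * (P * (N ! * (N ! * (1 + c⁻¹) ^ (N + 1)) * (1 + C) ^ N)), fun g hcg hg => ?_⟩
  have hC : 0 ≤ C := hg.weight_nonneg one_pos
  have hg0 : ∀ r, 0 < r → 0 < g r := fun r hr => hc.trans_le (hcg r hr)
  have hquot := (hasSymbolBound_rpow N γ).neg.mul (hg.inv fun r hr => (hg0 r hr).ne')
  simp only [← div_eq_mul_inv] at hquot
  refine hquot.mono fun r hr => ?_
  have hinv : ‖g r‖⁻¹ ≤ c⁻¹ := by
    rw [norm_of_nonneg (hg0 r hr).le]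
    exact inv_anti₀ hc (hcg r hr)
  calc 2 ^ N * (P * r ^ γ * (N ! * (N ! * (1 + ‖g r‖⁻¹) ^ (N + 1)) * (1 + C) ^ N))
      ≤ 2 ^ N * (P * r ^ γ * (N ! * (N ! * (1 + c⁻¹) ^ (N + 1)) * (1 + C) ^ N)) := by gcongr
    _ = _ := by ring

theorem norm_iteratedDerivWithin_pow_mul_mul_pow_le {m k : ℕ} (hmk : m ≤ k) {f w : ℝ → ℝ}
    (hf : ContDiffOn ℝ (k + 1 : ℕ) f (Ioi 0))
    (hf' : HasSymbolBound k (derivWithin f (Ioi 0)) w) {r : ℝ} (hr : 0 < r) :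
    ‖iteratedDerivWithin (k + 1) (fun x => x ^ m * f x) (Ioi 0) r‖ * r ^ (k + 1) ≤
      2 ^ (k + 1) * (m ! * r ^ m * (w r * r)) := by
  have hw : 0 ≤ w r := hf'.weight_nonneg hr
  have hpow := hasSymbolBound_pow (k + 1) m
  refine norm_iteratedDerivWithin_mul_mul_pow_le hpow.contDiffOn hf (uniqueDiffOn_Ioi 0) hr hr.le
    fun j hj => ?_
  rcases hj.lt_or_eq with hjk | rfl
  · obtain ⟨i, hi⟩ : ∃ i, k + 1 - j = i + 1 := ⟨k - j, by omega⟩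
    rw [hi, iteratedDerivWithin_succ', pow_succ, ← mul_assoc (‖_‖) (r ^ i)]
    have hf_i := hf'.norm_mul_pow_le i (by omega) r hr
    have hpow_j := hpow.norm_mul_pow_le j hj r hr
    gcongr
  · rw [iteratedDerivWithin_pow (mem_Ioi.2 hr) (uniqueDiffOn_Ioi 0),
      Nat.descFactorial_of_lt (Nat.lt_succ_of_le hmk), Nat.cast_zero, zero_mul, norm_zero, zero_mul,
      zero_mul]
    positivity

theorem norm_iteratedDerivWithin_pow_mul_exp_le {m k : ℕ} (hmk : m ≤ k) {h : ℝ → ℝ} {K γ : ℝ}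
    (hh : HasSymbolBound (k + 1) h fun r => K * r ^ γ) {r : ℝ} (hr : 0 < r) :
    ‖iteratedDerivWithin (k + 1) (fun x => x ^ m * exp (h x)) (Ioi 0) r‖ ≤
      2 ^ (k + 1) * m ! * 2 ^ k * K * k ! *
        (r ^ (γ + m - (k + 1)) * (1 + K * r ^ γ) ^ k * exp (h r)) := by
  have hexponent : r ^ (γ + m - (k + 1)) = r ^ γ * r ^ m / r ^ (k + 1) := by
    rw [rpow_sub hr, rpow_add hr, rpow_natCast, ← rpow_natCast r (k + 1), Nat.cast_succ]
  have hscaled := norm_iteratedDerivWithin_pow_mul_mul_pow_le hmk hh.contDiffOn.exp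
    hh.derivWithin_exp hr
  rw [← le_div_iff₀ (pow_pos hr (k + 1))] at hscaled
  refine hscaled.trans_eq ?_
  rw [hexponent]
  field_simp

theorem integrableOn_rpow_mul_one_add_pow_mul_exp {a γ b : ℝ} (ha : -1 < a) (hγ : 0 < γ)
    (hb : 0 < b) (K : ℝ) (k : ℕ) :
    IntegrableOn (fun r : ℝ => r ^ a * (1 + K * r ^ γ) ^ k * exp (-b * r ^ γ)) (Ioi 0) := by
  induction k generalizing a with
  | zero => simpa using integrableOn_rpow_mul_exp_neg_mul_rpow ha hγ hb
  | succ k ih =>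
    refine ((ih ha).add ((ih (a := a + γ) (by linarith)).const_mul K)).congr_fun
      (fun r hr => ?_) measurableSet_Ioi
    simp only [Pi.add_apply, rpow_add (mem_Ioi.1 hr)]
    ring

theorem kernel_derivative_integral_bound_general {m k : ℕ} (hmk : m ≤ k) {γ : ℝ}
    (hγ : (k : ℝ) - m < γ) {c C : ℝ} (hc : 0 < c) (hC : 0 < C) :
    ∃ M : ℝ, ∀ g : ℝ → ℝ, (∀ r, 0 < r → c ≤ g r) → HasSymbolBound (k + 1) g (fun _ => C) →
      IntegrableOn (iteratedDerivWithin (k + 1)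
        (fun r => r ^ m * exp (-(r ^ γ) / g r)) (Ioi 0)) (Ioi 0) ∧
      ∫ r in Ioi 0, |iteratedDerivWithin (k + 1)
        (fun r => r ^ m * exp (-(r ^ γ) / g r)) (Ioi 0) r| ≤ M := by
  obtain ⟨K, hK⟩ := exists_hasSymbolBound_neg_rpow_div (k + 1) γ C hc
  have hγ0 : 0 < γ := (sub_nonneg.2 (Nat.cast_le.2 hmk)).trans_lt hγ
  set majorant : ℝ → ℝ := fun r => 2 ^ (k + 1) * m ! * 2 ^ k * K * k ! *
    (r ^ (γ + m - (k + 1)) * (1 + K * r ^ γ) ^ k * exp (-C⁻¹ * r ^ γ))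
  have hmajorant : IntegrableOn majorant (Ioi 0) :=
    (integrableOn_rpow_mul_one_add_pow_mul_exp (by linarith) hγ0 (inv_pos.2 hC) K k).const_mul _
  refine ⟨∫ r in Ioi 0, majorant r, fun g hcg hg => ?_⟩
  have hh := hK g hcg hg
  have hle : ∀ r ∈ Ioi (0 : ℝ), ‖iteratedDerivWithin (k + 1)
      (fun r => r ^ m * exp (-(r ^ γ) / g r)) (Ioi 0) r‖ ≤ majorant r := by
    intro r hr
    have hr0 : 0 < r := hr
    have hKr : 0 ≤ K * r ^ γ := hh.weight_nonneg hr0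
    have hK0 : 0 ≤ K := nonneg_of_mul_nonneg_left hKr (rpow_pos_of_pos hr0 γ)
    refine (norm_iteratedDerivWithin_pow_mul_exp_le hmk hh hr0).trans ?_
    have hexp : -(r ^ γ) / g r ≤ -C⁻¹ * r ^ γ := by
      have hgC : C⁻¹ ≤ (g r)⁻¹ :=
        inv_anti₀ (hc.trans_le (hcg r hr0)) ((le_abs_self _).trans (hg.norm_le hr0))
      rw [div_eq_mul_inv, neg_mul, neg_mul, mul_comm, neg_le_neg_iff]
      gcongr
    dsimp only [majorant]
    gcongr
  have hcont := ((hasSymbolBound_pow (k + 1) m).contDiffOn.mul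
    hh.contDiffOn.exp).continuousOn_iteratedDerivWithin le_rfl (uniqueDiffOn_Ioi 0)
  have hint := hmajorant.mono' (hcont.aestronglyMeasurable measurableSet_Ioi)
    (ae_restrict_of_forall_mem measurableSet_Ioi hle)
  exact ⟨hint, setIntegral_mono_on hint.abs hmajorant measurableSet_Ioi hle⟩

/-- If `g ≥ 1` is `(n+1)`-times continuously differentiable on `(0,∞)` with
`|g^{(k)}(r)| ≤ C₀ r^{-k}` for `0 ≤ k ≤ n+1`, then the integrals
`∫₀^∞ |∂_r^{n+1}(r^{n-1} e^{-r^γ/g(r t^{-1/γ})})| dr` are finite and bounded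
uniformly in `t ∈ (0,1)`. -/
theorem kernel_derivative_integral_bound (n : ℕ) (hn : 1 ≤ n) (γ : ℝ) (hγ : 1 < γ)
    (g : ℝ → ℝ) (hg1 : ∀ r, 1 ≤ g r)
    (hsmooth : ContDiffOn ℝ (n + 1) g (Ioi 0))
    (C₀ : ℝ) (hC₀ : 0 < C₀)
    (hderiv : ∀ k ≤ n + 1, ∀ r : ℝ, 0 < r →
      |iteratedDerivWithin k g (Ioi 0) r| ≤ C₀ * r ^ (-(k : ℝ))) :
    ∃ M : ℝ, ∀ t ∈ Ioo (0 : ℝ) 1,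
      IntegrableOn (fun r : ℝ => iteratedDerivWithin (n + 1)
          (fun r : ℝ => r ^ (n - 1) * Real.exp (-(r ^ γ) / g (r * t ^ (-(1 / γ)))))
          (Ioi 0) r) (Ioi 0) volume ∧
      (∫ r in Ioi (0 : ℝ), |iteratedDerivWithin (n + 1)
          (fun r : ℝ => r ^ (n - 1) * Real.exp (-(r ^ γ) / g (r * t ^ (-(1 / γ)))))
          (Ioi 0) r|) ≤ M := by
  have hg : HasSymbolBound (n + 1) g fun _ => C₀ :=
    .of_norm_le_mul_rpow_neg (mod_cast hsmooth) hderiv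
  have hγn : (n : ℝ) - (n - 1 : ℕ) < γ := by rwa [Nat.cast_pred hn, sub_sub_cancel]
  obtain ⟨M, hM⟩ := kernel_derivative_integral_bound_general (n.sub_le 1) hγn one_pos hC₀
  exact ⟨M, fun t ht => hM _ (fun r _ => hg1 _) (hg.comp_mul_right (rpow_pos_of_pos ht.1 _))⟩
end

section
/- Let n ≥ 1 be an integer and let γ > 1. Then the function r ↦ (d/dr)^{n+1}[ r^{n-1} e^{-r^γ} ] is integrable on (0,∞), i.e. ∫_0^∞ |(d/dr)^{n+1}( r^{n-1} e^{-r^γ} )| dr < ∞. -/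
open MeasureTheory Real Set

/-!
Differentiating `r ^ a * exp (-(r ^ γ))` gives a combination of functions of the same shape: the
factor `r ^ a` contributes the exponent `a - 1`, and the exponential contributes `a + γ - 1`. Hence
the `k`-th derivative of `r ^ s * exp (-(r ^ γ))` is `s (s - 1) ⋯ (s - k + 1)` times
`r ^ (s - k) * exp (-(r ^ γ))`, plus terms with exponent at least `s + γ - k`. For `γ > 0` all such
functions with exponent larger than `-1` are integrable. When `s` is a natural number below `k`, the
first coefficient vanishes, so only `s + γ - k > -1` is required.
-/

theorem iteratedDerivWithin_succ_eqOn {𝕜 F : Type*} [NontriviallyNormedField 𝕜]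
    [NormedAddCommGroup F] [NormedSpace 𝕜 F] {f g g' : 𝕜 → F} {S : Set 𝕜} {k : ℕ}
    (hS : UniqueDiffOn 𝕜 S) (hf : EqOn (iteratedDerivWithin k f S) g S)
    (hg : ∀ x ∈ S, HasDerivWithinAt g (g' x) S x) :
    EqOn (iteratedDerivWithin (k + 1) f S) g' S := fun x hx => by
  rw [iteratedDerivWithin_succ]
  exact ((hg x hx).congr hf (hf hx)).derivWithin (hS x hx)

theorem hasDerivAt_rpow_mul_exp_neg_rpow (a γ : ℝ) {r : ℝ} (hr : 0 < r) :
    HasDerivAt (fun r : ℝ => r ^ a * exp (-(r ^ γ)))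
      (a * (r ^ (a - 1) * exp (-(r ^ γ))) - γ * (r ^ (a + γ - 1) * exp (-(r ^ γ)))) r := by
  have hpow (p : ℝ) : HasDerivAt (fun r : ℝ => r ^ p) (p * r ^ (p - 1)) r :=
    hasDerivAt_rpow_const (Or.inl hr.ne')
  have hadd : r ^ (a + γ - 1) = r ^ a * r ^ (γ - 1) := by rw [← rpow_add hr, add_sub_assoc]
  refine ((hpow a).mul (hpow γ).fun_neg.exp).congr_deriv ?_
  rw [hadd]
  ring

/-- The span of the functions `r ↦ r ^ a * exp (-(r ^ γ))` with `b ≤ a`. It collects the terms of a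
derivative whose order at the origin is at least `b`. Its elements are functions on all of `ℝ`, but
only their values on `(0, ∞)` matter. -/
def rpowMulExpSpan (γ b : ℝ) : Submodule ℝ (ℝ → ℝ) :=
  Submodule.span ℝ ((fun a r : ℝ => r ^ a * exp (-(r ^ γ))) '' Ici b)

section rpowMulExpSpan

variable {γ b : ℝ} {g : ℝ → ℝ}

theorem rpow_mul_exp_mem_rpowMulExpSpan {a : ℝ} (hab : b ≤ a) :
    (fun r : ℝ => r ^ a * exp (-(r ^ γ))) ∈ rpowMulExpSpan γ b :=
  Submodule.subset_span ⟨a, hab, rfl⟩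

theorem exists_hasDerivAt_mem_rpowMulExpSpan (hγ : 0 ≤ γ) (hg : g ∈ rpowMulExpSpan γ b) :
    ∃ g' ∈ rpowMulExpSpan γ (b - 1), ∀ r : ℝ, 0 < r → HasDerivAt g (g' r) r := by
  induction hg using Submodule.span_induction with
  | mem f hf =>
    obtain ⟨a, hab : b ≤ a, rfl⟩ := hf
    have hlow : b - 1 ≤ a - 1 := by linarith
    have hhigh : b - 1 ≤ a + γ - 1 := by linarith
    exact ⟨_, sub_mem (Submodule.smul_mem _ a (rpow_mul_exp_mem_rpowMulExpSpan hlow))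
      (Submodule.smul_mem _ γ (rpow_mul_exp_mem_rpowMulExpSpan hhigh)),
      fun _ hr => hasDerivAt_rpow_mul_exp_neg_rpow a γ hr⟩
  | zero => exact ⟨0, zero_mem _, fun r _ => hasDerivAt_const r 0⟩
  | add f₁ f₂ _ _ ih₁ ih₂ =>
    obtain ⟨f₁', hmem₁, hderiv₁⟩ := ih₁
    obtain ⟨f₂', hmem₂, hderiv₂⟩ := ih₂
    exact ⟨f₁' + f₂', add_mem hmem₁ hmem₂, fun r hr => (hderiv₁ r hr).add (hderiv₂ r hr)⟩
  | smul c f _ ih =>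
    obtain ⟨f', hmem, hderiv⟩ := ih
    exact ⟨c • f', Submodule.smul_mem _ c hmem, fun r hr => (hderiv r hr).const_smul c⟩

theorem integrableOn_of_mem_rpowMulExpSpan (hγ : 0 < γ) (hb : -1 < b)
    (hg : g ∈ rpowMulExpSpan γ b) : IntegrableOn g (Ioi 0) := by
  induction hg using Submodule.span_induction with
  | mem f hf =>
    obtain ⟨a, hab, rfl⟩ := hf
    exact integrableOn_rpow_mul_exp_neg_rpow (hb.trans_le hab) hγ
  | zero => exact integrableOn_zero
  | add f₁ f₂ _ _ ih₁ ih₂ => exact ih₁.add ih₂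
  | smul c f _ ih => exact ih.smul c

end rpowMulExpSpan

theorem exists_iteratedDerivWithin_rpow_mul_exp_eqOn {γ : ℝ} (hγ : 0 ≤ γ) (s : ℝ) (k : ℕ) :
    ∃ g ∈ rpowMulExpSpan γ (s + γ - k),
      EqOn (iteratedDerivWithin k (fun r : ℝ => r ^ s * exp (-(r ^ γ))) (Ioi 0))
        (fun r => (descPochhammer ℝ k).eval s * (r ^ (s - k) * exp (-(r ^ γ))) + g r)
        (Ioi 0) := by
  induction k with
  | zero => exact ⟨0, zero_mem _, fun r _ => by simp⟩
  | succ k ih =>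
    obtain ⟨g, hg, heq⟩ := ih
    obtain ⟨g', hg', hderiv⟩ := exists_hasDerivAt_mem_rpowMulExpSpan hγ hg
    set c := (descPochhammer ℝ k).eval s
    have hexp (t : ℝ) : t - (k + 1 : ℕ) = t - k - 1 := by rw [Nat.cast_succ, sub_add_eq_sub_sub]
    have hlead : (fun r : ℝ => r ^ (s - k + γ - 1) * exp (-(r ^ γ))) ∈
        rpowMulExpSpan γ (s + γ - k - 1) := rpow_mul_exp_mem_rpowMulExpSpan (by linarith)
    rw [hexp, hexp, descPochhammer_succ_eval]
    refine ⟨_, sub_mem hg' (Submodule.smul_mem _ (c * γ) hlead),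
      iteratedDerivWithin_succ_eqOn (uniqueDiffOn_Ioi 0) heq fun r hr => ?_⟩
    refine (((hasDerivAt_rpow_mul_exp_neg_rpow (s - k) γ hr).const_mul c).add
      (hderiv r hr)).hasDerivWithinAt.congr_deriv ?_
    simp only [Pi.sub_apply, Pi.smul_apply, smul_eq_mul]
    ring

theorem integrableOn_iteratedDerivWithin_rpow_mul_exp {γ s : ℝ} {k : ℕ} (hγ : 0 < γ)
    (hk : k < s + γ + 1) (hs : (descPochhammer ℝ k).eval s = 0 ∨ k < s + 1) :
    IntegrableOn (iteratedDerivWithin k (fun r : ℝ => r ^ s * exp (-(r ^ γ))) (Ioi 0))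
      (Ioi 0) := by
  obtain ⟨g, hg, heq⟩ := exists_iteratedDerivWithin_rpow_mul_exp_eqOn hγ.le s k
  rw [integrableOn_congr_fun heq measurableSet_Ioi]
  have hrest : IntegrableOn g (Ioi 0) :=
    integrableOn_of_mem_rpowMulExpSpan hγ (by linarith) hg
  rcases hs with hzero | hlt
  · simpa only [hzero, zero_mul, zero_add] using hrest
  · exact ((integrableOn_rpow_mul_exp_neg_rpow (by linarith) hγ).const_mul _).add hrest

theorem derivative_of_kernel_integrand_integrable_general {m k : ℕ} {γ : ℝ} (hγ : 0 < γ)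
    (hk : k < m + γ + 1) :
    IntegrableOn (iteratedDerivWithin k (fun r : ℝ => r ^ m * exp (-(r ^ γ))) (Ioi 0))
      (Ioi 0) := by
  have hcoeff : (descPochhammer ℝ k).eval (m : ℝ) = 0 ∨ (k : ℝ) < m + 1 := by
    rw [descPochhammer_eval_eq_descFactorial, Nat.cast_eq_zero, Nat.descFactorial_eq_zero_iff_lt]
    exact_mod_cast (lt_or_ge m k).imp_right Nat.lt_succ_of_le
  simpa only [rpow_natCast] using integrableOn_iteratedDerivWithin_rpow_mul_exp hγ hk hcoeff

/-- For `n ≥ 1` and `γ > 1`, the function `r ↦ ∂_r^{n+1}( r^{n-1} e^{-r^γ} )` is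
integrable on `(0,∞)`. -/
theorem derivative_of_kernel_integrand_integrable (n : ℕ) (hn : 1 ≤ n) (γ : ℝ)
    (hγ : 1 < γ) :
    IntegrableOn (fun r : ℝ => iteratedDerivWithin (n + 1)
        (fun r : ℝ => r ^ (n - 1) * Real.exp (-(r ^ γ))) (Ioi 0) r)
      (Ioi (0 : ℝ)) volume :=
  derivative_of_kernel_integrand_integrable_general (zero_lt_one.trans hγ)
    (by push_cast [hn]; linarith)
end

section
/- Let n ≥ 1 be an integer and let γ > 1. Then there exists a constant C > 0 such that for every real σ ≥ 1, |∫_0^∞ τ^{n-1} e^{-τ^γ} e^{iστ} dτ| ≤ C σ^{-n}. -/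
open MeasureTheory Real Set

/-!
Write `F f σ = ∫₀^∞ f(τ) e^{iστ} dτ`. Integration by parts gives `σ F f σ = i (f(0⁺) + F f' σ)`, so
each power of `σ` costs one derivative of `f`. For `f = τ^a e^{-τ^γ}` the derivative is a
combination of the amplitudes with exponents `a - 1` and `a - 1 + γ`, so one may differentiate as
long as the exponents stay above `-1`. The boundary term is zero except at `a = 0`, and that
exponent can only occur at the last step, where mere boundedness is needed.
-/

open Asymptotics Filter Topology

/-- The Fourier integral `∫₀^∞ f(τ) e^{iστ} dτ` of `f` over the half-line, with the frequency
normalised as in the oscillatory integral to be estimated (no factor `-2π`). -/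
noncomputable def halfLineFourier (f : ℝ → ℂ) (σ : ℝ) : ℂ :=
  ∫ τ in Ioi (0 : ℝ), f τ * Complex.exp (Complex.I * σ * τ)

/-- The amplitude `τ^a e^{-τ^γ}` with a real exponent `a`, so that the family is closed under
differentiation. -/
noncomputable def rpowMulExpNegRpow (γ a τ : ℝ) : ℂ :=
  ((τ ^ a * Real.exp (-(τ ^ γ)) : ℝ) : ℂ)

section HalfLineFourier

variable {f f' g : ℝ → ℂ}

lemma norm_cexp_I_mul_ofReal_mul_ofReal (σ τ : ℝ) : ‖Complex.exp (Complex.I * σ * τ)‖ = 1 := by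
  rw [mul_assoc, ← Complex.ofReal_mul, Complex.norm_exp_I_mul_ofReal]

lemma hasDerivAt_cexp_I_mul (σ τ : ℝ) :
    HasDerivAt (fun t : ℝ ↦ Complex.exp (Complex.I * σ * t))
      (Complex.I * σ * Complex.exp (Complex.I * σ * τ)) τ := by
  simpa [mul_comm] using
    ((Complex.ofRealCLM.hasDerivAt (x := τ)).const_mul (Complex.I * (σ : ℂ))).cexp

lemma integrableOn_mul_cexp {s : Set ℝ} (hf : IntegrableOn f s) (σ : ℝ) :
    IntegrableOn (fun τ ↦ f τ * Complex.exp (Complex.I * σ * τ)) s :=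
  hf.mul_bdd (by fun_prop) (.of_forall fun τ ↦ (norm_cexp_I_mul_ofReal_mul_ofReal σ τ).le)

lemma halfLineFourier_sub (hf : IntegrableOn f (Ioi 0)) (hg : IntegrableOn g (Ioi 0)) (σ : ℝ) :
    halfLineFourier (fun τ ↦ f τ - g τ) σ = halfLineFourier f σ - halfLineFourier g σ := by
  simp only [halfLineFourier, sub_mul]
  exact integral_sub (integrableOn_mul_cexp hf σ) (integrableOn_mul_cexp hg σ)

lemma halfLineFourier_const_mul (c : ℂ) (f : ℝ → ℂ) (σ : ℝ) :
    halfLineFourier (fun τ ↦ c * f τ) σ = c * halfLineFourier f σ := by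
  simp only [halfLineFourier, mul_assoc, integral_const_mul]

lemma norm_halfLineFourier_le (f : ℝ → ℂ) (σ : ℝ) :
    ‖halfLineFourier f σ‖ ≤ ∫ τ in Ioi (0 : ℝ), ‖f τ‖ := by
  simpa only [halfLineFourier, norm_mul, norm_cexp_I_mul_ofReal_mul_ofReal, mul_one] using
    norm_integral_le_integral_norm (μ := volume.restrict (Ioi (0 : ℝ)))
      fun τ : ℝ ↦ f τ * Complex.exp (Complex.I * σ * τ)

lemma isBigO_halfLineFourier_one (f : ℝ → ℂ) : halfLineFourier f =O[⊤] fun _ ↦ (1 : ℝ) :=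
  isBigO_top.2 ⟨_, fun σ ↦ by simpa using norm_halfLineFourier_le f σ⟩

lemma mul_halfLineFourier_eq_of_hasDerivAt {c : ℂ}
    (hderiv : ∀ τ ∈ Ioi (0 : ℝ), HasDerivAt f (f' τ) τ)
    (hf : IntegrableOn f (Ioi 0)) (hf' : IntegrableOn f' (Ioi 0))
    (hc : Tendsto f (𝓝[>] 0) (𝓝 c)) (σ : ℝ) :
    σ * halfLineFourier f σ = Complex.I * (c + halfLineFourier f' σ) := by
  have hexp_zero : Tendsto (fun t : ℝ ↦ Complex.exp (Complex.I * σ * t)) (𝓝[>] 0) (𝓝 1) := by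
    simpa using (hasDerivAt_cexp_I_mul σ 0).continuousAt.tendsto.mono_left nhdsWithin_le_nhds
  have hzero : Tendsto (f * fun t : ℝ ↦ Complex.exp (Complex.I * σ * t)) (𝓝[>] 0) (𝓝 c) := by
    simpa only [mul_one, Pi.mul_def] using hc.mul hexp_zero
  have hinfty : Tendsto (f * fun t : ℝ ↦ Complex.exp (Complex.I * σ * t)) atTop (𝓝 0) := by
    have hf_infty := tendsto_zero_of_hasDerivAt_of_integrableOn_Ioi hderiv hf' hf
    refine squeeze_zero_norm (fun τ ↦ ?_) (tendsto_zero_iff_norm_tendsto_zero.1 hf_infty)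
    simp [norm_cexp_I_mul_ofReal_mul_ofReal]
  have parts : ∫ τ in Ioi (0 : ℝ), f τ * (Complex.I * σ * Complex.exp (Complex.I * σ * τ)) =
      0 - c - halfLineFourier f' σ :=
    integral_Ioi_mul_deriv_eq_deriv_mul hderiv (fun τ _ ↦ hasDerivAt_cexp_I_mul σ τ)
      (by simpa only [IntegrableOn, Pi.mul_def, mul_left_comm] using
        (integrableOn_mul_cexp hf σ).const_mul (Complex.I * σ))
      (integrableOn_mul_cexp hf' σ) hzero hinfty
  simp only [mul_left_comm (f _), integral_const_mul] at parts
  change Complex.I * σ * halfLineFourier f σ = _ at parts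
  linear_combination -Complex.I * parts + σ * halfLineFourier f σ * Complex.I_sq

end HalfLineFourier

section Amplitude

variable {γ a : ℝ}

lemma hasDerivAt_rpowMulExpNegRpow (γ a : ℝ) {τ : ℝ} (hτ : 0 < τ) :
    HasDerivAt (rpowMulExpNegRpow γ a)
      (a * rpowMulExpNegRpow γ (a - 1) τ - γ * rpowMulExpNegRpow γ (a - 1 + γ) τ) τ := by
  have hpow (b : ℝ) : HasDerivAt (fun t : ℝ ↦ t ^ b) (b * τ ^ (b - 1)) τ :=
    hasDerivAt_rpow_const (.inl hτ.ne')
  have hadd : τ ^ (a - 1 + γ) = τ ^ a * τ ^ (γ - 1) := by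
    rw [← rpow_add hτ]
    ring_nf
  refine ((hpow a).mul (hpow γ).neg.exp).ofReal_comp.congr_deriv ?_
  simp only [rpowMulExpNegRpow, hadd, Pi.neg_apply]
  push_cast
  ring

lemma integrableOn_rpowMulExpNegRpow (hγ : 0 < γ) (ha : -1 < a) :
    IntegrableOn (rpowMulExpNegRpow γ a) (Ioi 0) :=
  (integrableOn_rpow_mul_exp_neg_rpow ha hγ).ofReal

-- By the convention `0 ^ 0 = 1`, the limit `0 ^ a` is also correct at `a = 0`.
lemma tendsto_rpowMulExpNegRpow_nhdsGT_zero (hγ : 0 < γ) (ha : 0 ≤ a) :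
    Tendsto (rpowMulExpNegRpow γ a) (𝓝[>] 0) (𝓝 (0 ^ a : ℝ)) := by
  have hcont : ContinuousAt (rpowMulExpNegRpow γ a) 0 :=
    Complex.continuous_ofReal.continuousAt.comp <|
      (continuousAt_rpow_const _ _ (.inr ha)).mul
        (continuousAt_rpow_const _ _ (.inr hγ.le)).neg.rexp
  simpa [rpowMulExpNegRpow, zero_rpow hγ.ne'] using hcont.tendsto.mono_left nhdsWithin_le_nhds

lemma mul_halfLineFourier_exp_neg_rpow (hγ : 0 < γ) (σ : ℝ) :
    σ * halfLineFourier (rpowMulExpNegRpow γ 0) σ =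
      Complex.I * (1 - γ * halfLineFourier (rpowMulExpNegRpow γ (γ - 1)) σ) := by
  have hderiv (τ : ℝ) (hτ : τ ∈ Ioi 0) :
      HasDerivAt (rpowMulExpNegRpow γ 0) (-γ * rpowMulExpNegRpow γ (γ - 1) τ) τ := by
    simpa [neg_add_eq_sub] using hasDerivAt_rpowMulExpNegRpow γ 0 hτ
  have hint := integrableOn_rpowMulExpNegRpow hγ (show -1 < γ - 1 by linarith)
  rw [mul_halfLineFourier_eq_of_hasDerivAt hderiv (integrableOn_rpowMulExpNegRpow hγ (by norm_num))
    (hint.const_mul _) (tendsto_rpowMulExpNegRpow_nhdsGT_zero hγ le_rfl),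
    halfLineFourier_const_mul]
  simp [sub_eq_add_neg]

lemma mul_halfLineFourier_rpowMulExpNegRpow (hγ : 0 < γ) (ha : 0 < a) (σ : ℝ) :
    σ * halfLineFourier (rpowMulExpNegRpow γ a) σ =
      Complex.I * (a * halfLineFourier (rpowMulExpNegRpow γ (a - 1)) σ -
        γ * halfLineFourier (rpowMulExpNegRpow γ (a - 1 + γ)) σ) := by
  have hint := (integrableOn_rpowMulExpNegRpow hγ (show -1 < a - 1 by linarith)).const_mul (a : ℂ)
  have hintγ :=
    (integrableOn_rpowMulExpNegRpow hγ (show -1 < a - 1 + γ by linarith)).const_mul (γ : ℂ)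
  rw [mul_halfLineFourier_eq_of_hasDerivAt (fun τ hτ ↦ hasDerivAt_rpowMulExpNegRpow γ a hτ)
    (integrableOn_rpowMulExpNegRpow hγ (by linarith)) (hint.sub hintγ)
    (tendsto_rpowMulExpNegRpow_nhdsGT_zero hγ ha.le), halfLineFourier_sub hint hintγ,
    halfLineFourier_const_mul, halfLineFourier_const_mul, zero_rpow ha.ne', Complex.ofReal_zero,
    zero_add]

lemma isBigO_mul_halfLineFourier_rpowMulExpNegRpow (hγ : 0 < γ) (ha : 0 ≤ a) :
    (fun σ : ℝ ↦ σ * halfLineFourier (rpowMulExpNegRpow γ a) σ) =O[⊤] fun _ ↦ (1 : ℝ) := by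
  rcases ha.eq_or_lt with rfl | ha_pos
  · simp only [mul_halfLineFourier_exp_neg_rpow hγ]
    exact ((isBigO_const_const _ one_ne_zero _).sub
      ((isBigO_halfLineFourier_one _).const_mul_left _)).const_mul_left _
  · simp only [mul_halfLineFourier_rpowMulExpNegRpow hγ ha_pos]
    exact (((isBigO_halfLineFourier_one _).const_mul_left _).sub
      ((isBigO_halfLineFourier_one _).const_mul_left _)).const_mul_left _

lemma isBigO_pow_mul_halfLineFourier_rpowMulExpNegRpow (hγ : 0 < γ) {n : ℕ} (hn : 1 ≤ n)
    (hna : n ≤ a + 1) :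
    (fun σ : ℝ ↦ (σ : ℂ) ^ n * halfLineFourier (rpowMulExpNegRpow γ a) σ) =O[⊤]
      fun _ ↦ (1 : ℝ) := by
  induction n, hn using Nat.le_induction generalizing a with
  | base =>
    simpa only [pow_one] using
      isBigO_mul_halfLineFourier_rpowMulExpNegRpow hγ (a := a) (by simpa using hna)
  | succ n hn ih =>
    have hn_one : (1 : ℝ) ≤ n := by exact_mod_cast hn
    push_cast at hna
    have hpred := ih (a := a - 1) (by linarith)
    have hpred_add := ih (a := a - 1 + γ) (by linarith)
    refine (((hpred.const_mul_left a).sub (hpred_add.const_mul_left γ)).const_mul_left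
      Complex.I).congr_left fun σ ↦ ?_
    rw [pow_succ, mul_assoc, mul_halfLineFourier_rpowMulExpNegRpow hγ (by linarith)]
    ring

end Amplitude

theorem oscillatory_integral_decay_general {γ a : ℝ} (hγ : 0 < γ) {n : ℕ} (hn : 1 ≤ n)
    (hna : n ≤ a + 1) :
    ∃ C : ℝ, 0 < C ∧ ∀ σ : ℝ, σ ≠ 0 →
      ‖∫ τ in Ioi (0 : ℝ),
          ((τ ^ a * Real.exp (-(τ ^ γ)) : ℝ) : ℂ) *
            Complex.exp (Complex.I * (σ : ℂ) * (τ : ℂ))‖ ≤ C * |σ| ^ (-(n : ℝ)) := by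
  obtain ⟨C, hC, hbound⟩ :=
    (isBigO_pow_mul_halfLineFourier_rpowMulExpNegRpow hγ hn hna).exists_pos
  refine ⟨C, hC, fun σ hσ ↦ ?_⟩
  have hσC : |σ| ^ n * ‖halfLineFourier (rpowMulExpNegRpow γ a) σ‖ ≤ C := by
    simpa using isBigOWith_top.1 hbound σ
  rwa [rpow_neg (abs_nonneg σ), rpow_natCast, ← div_eq_mul_inv, le_div_iff₀' (by positivity)]

/-- For `n ≥ 1` and `γ > 1`, oscillatory integral decay:
`|∫₀^∞ τ^{n-1} e^{-τ^γ} e^{iστ} dτ| ≤ C σ^{-n}` for all `σ ≥ 1`. -/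
theorem oscillatory_integral_decay (n : ℕ) (hn : 1 ≤ n) (γ : ℝ) (hγ : 1 < γ) :
    ∃ C : ℝ, 0 < C ∧ ∀ σ : ℝ, 1 ≤ σ →
      ‖∫ τ in Ioi (0 : ℝ),
          ((τ ^ (n - 1) * Real.exp (-(τ ^ γ)) : ℝ) : ℂ) *
            Complex.exp (Complex.I * (σ : ℂ) * (τ : ℂ))‖ ≤ C * σ ^ (-(n : ℝ)) := by
  obtain ⟨C, hC, hbound⟩ := oscillatory_integral_decay_general (a := (n - 1 : ℕ))
    (zero_lt_one.trans hγ) hn (by simp [hn])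
  exact ⟨C, hC, fun σ hσ ↦ by
    simpa [abs_of_pos (zero_lt_one.trans_le hσ)] using hbound σ (zero_lt_one.trans_le hσ).ne'⟩
end

section
/- Let γ > 0 and let k ≥ 1 be an integer. Let g : ℝ → ℝ be k-times continuously differentiable on (0,∞), bounded below by 1, and suppose there is a constant C₀ with |g^{(m)}(r)| ≤ C₀ r^{-m} for all r > 0 and all integers 1 ≤ m ≤ k. Then there exists a constant C > 0 such that for every t ∈ (0,1] and every r > 0, the k-th derivative of the function r ↦ exp(-t r^γ / g(r)) satisfies |(d/dr)^k exp(-t r^γ/g(r))| ≤ C r^{-k}. In particular, the symbols r ↦ exp(-t r^γ/g(r)) satisfy Mikhlin-type derivative bounds of order k uniformly in t ∈ (0,1]. -/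
open MeasureTheory Real Set

/-!
The estimates `|f⁽ᵐ⁾(r)| ≤ a w(r) r⁻ᵐ` are scale invariant. Dilating the outer function so that the
inner one takes the value `1` at the point considered, one sees that they pass to compositions
`ψ ∘ f` as soon as `f > 0` satisfies them with respect to itself. Hence `u = r ^ γ * g⁻¹` satisfies
them with respect to itself, because `r ^ γ` and `r⁻¹` do. Finally `x ↦ exp (-t x)` satisfies them
with weight `1` and constant `n!` for every `t ≥ 0`, because `(t x) ^ m ≤ m! exp (t x)`; composing
with `u` leaves the constant independent of `t`.
-/

open scoped Nat

section IteratedDeriv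

variable {𝕜 F A : Type*} [NontriviallyNormedField 𝕜] [NormedAddCommGroup F] [NormedSpace 𝕜 F]
  [NormedRing A] [NormedAlgebra 𝕜 A]

theorem norm_iteratedDerivWithin_comp_le {ψ : 𝕜 → F} {f : 𝕜 → 𝕜} {s t : Set 𝕜} {x : 𝕜} {n : ℕ}
    {C D : ℝ} (hψ : ContDiffOn 𝕜 n ψ t) (hf : ContDiffOn 𝕜 n f s) (ht : UniqueDiffOn 𝕜 t)
    (hs : UniqueDiffOn 𝕜 s) (hst : MapsTo f s t) (hx : x ∈ s)
    (hC : ∀ i ≤ n, ‖iteratedDerivWithin i ψ t (f x)‖ ≤ C)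
    (hD : ∀ i, 1 ≤ i → i ≤ n → ‖iteratedDerivWithin i f s x‖ ≤ D ^ i) :
    ‖iteratedDerivWithin n (ψ ∘ f) s x‖ ≤ n ! * C * D ^ n := by
  simp only [← norm_iteratedFDerivWithin_eq_norm_iteratedDerivWithin] at hC hD ⊢
  exact norm_iteratedFDerivWithin_comp_le hψ hf le_rfl ht hs hst hx hC hD

theorem norm_iteratedDerivWithin_mul_le {f g : 𝕜 → A} {s : Set 𝕜} {x : 𝕜} {n : ℕ}
    (hf : ContDiffOn 𝕜 n f s) (hg : ContDiffOn 𝕜 n g s) (hs : UniqueDiffOn 𝕜 s) (hx : x ∈ s) :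
    ‖iteratedDerivWithin n (fun y => f y * g y) s x‖ ≤ ∑ i ∈ Finset.range (n + 1),
      n.choose i * ‖iteratedDerivWithin i f s x‖ * ‖iteratedDerivWithin (n - i) g s x‖ := by
  simp only [← norm_iteratedFDerivWithin_eq_norm_iteratedDerivWithin]
  exact norm_iteratedFDerivWithin_mul_le hf hg hs hx le_rfl

end IteratedDeriv

variable {F A : Type*} [NormedAddCommGroup F] [NormedSpace ℝ F] [NormedRing A] [NormedAlgebra ℝ A]

theorem norm_iteratedDerivWithin_comp_le_of_scale {ψ : ℝ → F} {f : ℝ → ℝ} {s : Set ℝ} {x : ℝ}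
    {n : ℕ} {ρ C D : ℝ} (hρ : 0 < ρ) (hψ : ContDiffOn ℝ n ψ (Ioi 0)) (hf : ContDiffOn ℝ n f s)
    (hs : UniqueDiffOn ℝ s) (hst : MapsTo f s (Ioi 0)) (hx : x ∈ s)
    (hC : ∀ i ≤ n, ‖iteratedDerivWithin i ψ (Ioi 0) (f x)‖ ≤ C / ρ ^ i)
    (hD : ∀ i, 1 ≤ i → i ≤ n → ‖iteratedDerivWithin i f s x‖ ≤ ρ * D ^ i) :
    ‖iteratedDerivWithin n (ψ ∘ f) s x‖ ≤ n ! * C * D ^ n := by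
  have hdilate : MapsTo (ρ * ·) (Ioi 0) (Ioi 0) := fun y hy => mul_pos hρ hy
  have hfactor : ψ ∘ f = (fun y => ψ (ρ * y)) ∘ (fun y => ρ⁻¹ * f y) := by
    ext y
    simp only [Function.comp_apply, mul_inv_cancel_left₀ hρ.ne']
  rw [hfactor]
  refine norm_iteratedDerivWithin_comp_le (t := Ioi 0) (hψ.comp (by fun_prop) hdilate)
    (contDiffOn_const.mul hf) (uniqueDiffOn_Ioi 0) hs
    (fun y hy => mul_pos (inv_pos.2 hρ) (hst hy)) hx (fun i hi => ?_) (fun i h1 hi => ?_)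
  · have hx' : ρ⁻¹ * f x ∈ Ioi (0 : ℝ) := mul_pos (inv_pos.2 hρ) (hst hx)
    rw [iteratedDerivWithin_comp_const_smul hx' (uniqueDiffOn_Ioi 0)
      (hψ.of_le (by exact_mod_cast hi)) ρ hdilate, mul_inv_cancel_left₀ hρ.ne', norm_smul,
      norm_pow, norm_of_nonneg hρ.le, ← le_div_iff₀' (by positivity)]
    exact hC i hi
  · rw [iteratedDerivWithin_const_mul_field, norm_mul, norm_inv, norm_of_nonneg hρ.le,
      inv_mul_le_iff₀ hρ]
    exact hD i h1 hi

/-- `MikhlinBound n a f w` says that `f` is a symbol of order `n` and weight `w` on `(0, ∞)`: it is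
`n` times continuously differentiable there and its derivatives of order `m ≤ n` are at most
`a * w r / r ^ m`. The constant `a` is part of the data, so that estimates can be uniform in a
parameter. -/
structure MikhlinBound (n : ℕ) (a : ℝ) (f : ℝ → F) (w : ℝ → ℝ) : Prop where
  contDiffOn : ContDiffOn ℝ n f (Ioi 0)
  norm_iteratedDerivWithin_le : ∀ m ≤ n, ∀ r : ℝ, 0 < r →
    ‖iteratedDerivWithin m f (Ioi 0) r‖ ≤ a * w r / r ^ m

namespace MikhlinBound

variable {n : ℕ} {a b : ℝ}

theorem mul_weight_nonneg {f : ℝ → F} {w : ℝ → ℝ} (hf : MikhlinBound n a f w) {r : ℝ}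
    (hr : 0 < r) : 0 ≤ a * w r := by
  simpa using (norm_nonneg _).trans (hf.norm_iteratedDerivWithin_le 0 n.zero_le r hr)

theorem mul {f g : ℝ → A} {w v : ℝ → ℝ} (hf : MikhlinBound n a f w) (hg : MikhlinBound n b g v) :
    MikhlinBound n (2 ^ n * (a * b)) (fun r => f r * g r) (fun r => w r * v r) := by
  refine ⟨hf.contDiffOn.mul hg.contDiffOn, fun m hm r hr => ?_⟩
  have hmn : (m : WithTop ℕ∞) ≤ n := by exact_mod_cast hm
  have haw := hf.mul_weight_nonneg hr
  have hbv := hg.mul_weight_nonneg hr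
  have hterm : ∀ i ∈ Finset.range (m + 1),
      m.choose i * ‖iteratedDerivWithin i f (Ioi 0) r‖ * ‖iteratedDerivWithin (m - i) g (Ioi 0) r‖
        ≤ m.choose i * (a * w r * (b * v r) / r ^ m) := by
    intro i hi
    have him : i ≤ m := Finset.mem_range_succ_iff.1 hi
    calc _ ≤ m.choose i * (a * w r / r ^ i) * (b * v r / r ^ (m - i)) := by
          gcongr
          · exact hf.norm_iteratedDerivWithin_le i (him.trans hm) r hr
          · exact hg.norm_iteratedDerivWithin_le (m - i) ((m.sub_le i).trans hm) r hr
      _ = m.choose i * (a * w r * (b * v r) / r ^ m) := by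
          rw [mul_assoc, div_mul_div_comm, ← pow_add, Nat.add_sub_cancel' him]
  calc _ ≤ ∑ i ∈ Finset.range (m + 1), m.choose i * (a * w r * (b * v r) / r ^ m) :=
        (norm_iteratedDerivWithin_mul_le (hf.contDiffOn.of_le hmn) (hg.contDiffOn.of_le hmn)
          (uniqueDiffOn_Ioi 0) hr).trans (Finset.sum_le_sum hterm)
    _ = 2 ^ m * (a * w r * (b * v r) / r ^ m) := by
        rw [← Finset.sum_mul]
        exact_mod_cast congrArg (fun N : ℕ => (N : ℝ) * _) (Nat.sum_range_choose m)
    _ ≤ 2 ^ n * (a * w r * (b * v r) / r ^ m) := by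
        gcongr
        exact one_le_two
    _ = 2 ^ n * (a * b) * (w r * v r) / r ^ m := by ring

theorem comp {ψ : ℝ → F} {f w : ℝ → ℝ} (hψ : MikhlinBound n b ψ w) (hf : MikhlinBound n a f f)
    (hpos : ∀ r, 0 < r → 0 < f r) :
    MikhlinBound n (n ! * b * max 1 a ^ n) (ψ ∘ f) (w ∘ f) := by
  refine ⟨hψ.contDiffOn.comp hf.contDiffOn hpos, fun m hm r hr => ?_⟩
  have hmn : (m : WithTop ℕ∞) ≤ n := by exact_mod_cast hm
  have hfr := hpos r hr
  have hbw := hψ.mul_weight_nonneg hfr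
  have hinner : ∀ i, 1 ≤ i → i ≤ m →
      ‖iteratedDerivWithin i f (Ioi 0) r‖ ≤ f r * (max 1 a / r) ^ i := by
    intro i h1 hi
    calc _ ≤ a * f r / r ^ i := hf.norm_iteratedDerivWithin_le i (hi.trans hm) r hr
      _ ≤ max 1 a ^ i * f r / r ^ i := by
          gcongr
          exact (le_max_right 1 a).trans (le_self_pow₀ (le_max_left 1 a) (by lia))
      _ = f r * (max 1 a / r) ^ i := by rw [div_pow]; ring
  calc _ ≤ m ! * (b * w (f r)) * (max 1 a / r) ^ m :=
        norm_iteratedDerivWithin_comp_le_of_scale hfr (hψ.contDiffOn.of_le hmn)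
          (hf.contDiffOn.of_le hmn) (uniqueDiffOn_Ioi 0) hpos hr
          (fun i hi => hψ.norm_iteratedDerivWithin_le i (hi.trans hm) (f r) hfr) hinner
    _ = m ! * (b * w (f r)) * max 1 a ^ m / r ^ m := by rw [div_pow, mul_div_assoc]
    _ ≤ n ! * (b * w (f r)) * max 1 a ^ n / r ^ m := by
        gcongr
        exact le_max_left 1 a
    _ = n ! * b * max 1 a ^ n * (w ∘ f) r / r ^ m := by
        rw [Function.comp_apply]; ring

end MikhlinBound

theorem exists_mikhlinBound_rpow (n : ℕ) (γ : ℝ) :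
    ∃ a, MikhlinBound n a (fun r : ℝ => r ^ γ) (fun r => r ^ γ) := by
  refine ⟨∑ i ∈ Finset.range (n + 1), |(descPochhammer ℝ i).eval γ|,
    fun r hr => (contDiffAt_rpow_const_of_ne hr.ne').contDiffWithinAt, fun m hm r hr => ?_⟩
  rw [iteratedDerivWithin_of_isOpen_eq_iterate isOpen_Ioi hr, iter_deriv_rpow_const, norm_mul,
    norm_of_nonneg (rpow_nonneg hr.le _), rpow_sub_natCast hr.ne', ← mul_div_assoc]
  gcongr
  exact Finset.single_le_sum (f := fun i => |(descPochhammer ℝ i).eval γ|)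
    (fun i _ => abs_nonneg _) (Finset.mem_range_succ_iff.2 hm)

theorem MikhlinBound.exists_inv_self {n : ℕ} {a : ℝ} {g : ℝ → ℝ} (hg : MikhlinBound n a g g)
    (hpos : ∀ r, 0 < r → 0 < g r) :
    ∃ b, MikhlinBound n b (fun r => (g r)⁻¹) (fun r => (g r)⁻¹) := by
  obtain ⟨c, hrpow⟩ := exists_mikhlinBound_rpow n (-1)
  simp only [rpow_neg_one] at hrpow
  exact ⟨_, hrpow.comp hg hpos⟩

theorem mikhlinBound_exp_neg_mul (n : ℕ) {t : ℝ} (ht : 0 ≤ t) :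
    MikhlinBound n (n !) (fun x => Real.exp (-t * x)) (fun _ => 1) := by
  refine ⟨by fun_prop, fun m hm x hx => ?_⟩
  rw [iteratedDerivWithin_of_isOpen isOpen_Ioi hx, iteratedDeriv_exp_const_mul, norm_mul,
    norm_pow, norm_neg, norm_of_nonneg ht, norm_of_nonneg (Real.exp_pos _).le, mul_one,
    le_div_iff₀ (by positivity)]
  have hexp : (t * x) ^ m ≤ Real.exp (t * x) * m ! :=
    (div_le_iff₀ (by positivity)).1 (pow_div_factorial_le_exp _ (by positivity) m)
  calc t ^ m * Real.exp (-t * x) * x ^ m = (t * x) ^ m * Real.exp (-t * x) := by ring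
    _ ≤ Real.exp (t * x) * m ! * Real.exp (-t * x) := by gcongr
    _ = m ! := by rw [mul_right_comm, ← Real.exp_add, neg_mul, add_neg_cancel, exp_zero, one_mul]
    _ ≤ n ! := by exact_mod_cast Nat.factorial_le hm

theorem MikhlinBound.exp_neg_mul {n : ℕ} {a t : ℝ} {u : ℝ → ℝ} (hu : MikhlinBound n a u u)
    (hpos : ∀ r, 0 < r → 0 < u r) (ht : 0 ≤ t) :
    MikhlinBound n (n ! * n ! * max 1 a ^ n) (fun r => Real.exp (-t * u r)) (fun _ => 1) :=
  (mikhlinBound_exp_neg_mul n ht).comp hu hpos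

theorem symbol_mikhlin_bound_general (γ : ℝ) {k : ℕ} {g : ℝ → ℝ}
    (hsmooth : ContDiffOn ℝ k g (Ioi 0)) (hpos : ∀ r, 0 < r → 0 < g r) {C₀ : ℝ}
    (hderiv : ∀ m, 1 ≤ m → m ≤ k → ∀ r : ℝ, 0 < r →
      |iteratedDerivWithin m g (Ioi 0) r| ≤ C₀ * g r * r ^ (-(m : ℝ))) :
    ∃ C : ℝ, 0 < C ∧ ∀ t : ℝ, 0 ≤ t → ∀ r : ℝ, 0 < r →
      |iteratedDerivWithin k (fun r : ℝ => Real.exp (-t * r ^ γ / g r)) (Ioi 0) r| ≤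
        C * r ^ (-(k : ℝ)) := by
  have hg : MikhlinBound k (max 1 C₀) g g := by
    refine ⟨hsmooth, fun m hm r hr => ?_⟩
    have hgr := hpos r hr
    rcases m.eq_zero_or_pos with rfl | hm0
    · simpa [abs_of_pos hgr] using le_mul_of_one_le_left hgr.le (le_max_left 1 C₀)
    · refine (hderiv m hm0 hm r hr).trans ?_
      rw [rpow_neg hr.le, rpow_natCast, ← div_eq_mul_inv]
      gcongr
      exact le_max_right 1 C₀
  obtain ⟨a, hrpow⟩ := exists_mikhlinBound_rpow k γ
  obtain ⟨b, hinv⟩ := hg.exists_inv_self hpos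
  have hu_pos : ∀ r, 0 < r → 0 < r ^ γ * (g r)⁻¹ := fun r hr =>
    mul_pos (rpow_pos_of_pos hr γ) (inv_pos.2 (hpos r hr))
  refine ⟨k ! * k ! * max 1 (2 ^ k * (a * b)) ^ k, by positivity, fun t ht r hr => ?_⟩
  have hsymbol := ((hrpow.mul hinv).exp_neg_mul hu_pos ht).norm_iteratedDerivWithin_le k le_rfl r hr
  rw [rpow_neg hr.le, rpow_natCast]
  simpa only [div_eq_mul_inv, mul_assoc, mul_one, norm_eq_abs] using hsymbol

/-- If `g ≥ 1` is `k`-times continuously differentiable on `(0,∞)` with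
`|g^{(m)}(r)| ≤ C₀ r^{-m}` for `1 ≤ m ≤ k`, then the symbols `r ↦ exp(-t r^γ / g r)`
satisfy Mikhlin-type derivative bounds of order `k` uniformly in `t ∈ (0,1]`. -/
theorem symbol_mikhlin_bound (γ : ℝ) (hγ : 0 < γ) (k : ℕ) (hk : 1 ≤ k) (g : ℝ → ℝ)
    (hsmooth : ContDiffOn ℝ k g (Ioi 0)) (hg1 : ∀ r, 1 ≤ g r)
    (C₀ : ℝ)
    (hderiv : ∀ m, 1 ≤ m → m ≤ k → ∀ r : ℝ, 0 < r →
      |iteratedDerivWithin m g (Ioi 0) r| ≤ C₀ * r ^ (-(m : ℝ))) :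
    ∃ C : ℝ, 0 < C ∧ ∀ t ∈ Ioc (0 : ℝ) 1, ∀ r : ℝ, 0 < r →
      |iteratedDerivWithin k (fun r : ℝ => Real.exp (-t * r ^ γ / g r)) (Ioi 0) r| ≤
        C * r ^ (-(k : ℝ)) := by
  have hC₀ : 0 ≤ C₀ := by simpa using (abs_nonneg _).trans (hderiv 1 le_rfl hk 1 one_pos)
  obtain ⟨C, hC, hbound⟩ := symbol_mikhlin_bound_general γ hsmooth
    (fun r _ => one_pos.trans_le (hg1 r)) fun m h1 hm r hr => (hderiv m h1 hm r hr).trans <| by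
      gcongr
      exact le_mul_of_one_le_right hC₀ (hg1 r)
  exact ⟨C, hC, fun t ht => hbound t ht.1.le⟩
end
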